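/- Let M be an idempotent magma satisfying the generalized entropic property. If M is left cancellative (z*x = z*y implies x = y for all x,y,z) or right cancellative (x*z = y*z implies x = y for all x,y,z), then M is medial. -/

import Mathlib

/-- Evaluation of a binary term (an element of the free magma on two
generators) in a magma `M` under the assignment `0 ↦ a`, `1 ↦ b`. -/
def evalBin {M : Type*} [Mul M] (t : FreeMagma (Fin 2)) (a b : M) : M :=
  FreeMagma.lift ![a, b] t

/-- A magma satisfies the generalized entropic property if there are binary
terms `t`, `s` with `(x*y)*(u*v) = t(x,u)*s(y,v)`. -/
def GEP (M : Type*) [Mul M] : Prop :=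
  ∃ t s : FreeMagma (Fin 2),
    ∀ x y u v : M, (x * y) * (u * v) = evalBin t x u * evalBin s y v

/-!
Suppose `(x * y) * (u * v) = T x u * S y v` for some binary operations `T` and `S`. By idempotence,
`x * y = T x x * S y y`. If left multiplications are injective, comparing these two equations gives
`S y v = σ (y * v)` for the diagonal `σ y = S y y`; left distributivity follows, and from it that
`σ` is an endomorphism. Expanding `T x u * σ (x * z) = (x * u) * (x * z)` by
distributivity now yields `T x u * σ z = (x * u) * z`, which is mediality for `z = y * v`.
The right cancellative case is the left one in the opposite magma.
-/

/-- The functional equation of the generalized entropic property, with arbitrary binary operations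
`T` and `S` on `M` in place of the evaluations of two terms. -/
def IsEntropicPair {M : Type*} [Mul M] (T S : M → M → M) : Prop :=
  ∀ x y u v : M, (x * y) * (u * v) = T x u * S y v

namespace IsEntropicPair

variable {M : Type*} [Mul M] {T S : M → M → M}

protected theorem op (h : IsEntropicPair T S) :
    IsEntropicPair (fun a b : Mᵐᵒᵖ ↦ MulOpposite.op (S b.unop a.unop))
      (fun a b ↦ MulOpposite.op (T b.unop a.unop)) :=
  fun x y u v ↦ MulOpposite.unop_injective (h v.unop u.unop y.unop x.unop)

theorem mul_eq_diag_mul_diag (h : IsEntropicPair T S) (hidem : ∀ x : M, x * x = x) (x y : M) :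
    x * y = T x x * S y y := by
  rw [← h, hidem]

section LeftCancel

variable [IsLeftCancelMul M]

theorem right_eq_right_diag_mul (h : IsEntropicPair T S) (hidem : ∀ x : M, x * x = x)
    (y v : M) : S y v = S (y * v) (y * v) := by
  apply mul_left_cancel (a := T y y)
  calc T y y * S y v = y * (y * v) := by rw [← h, hidem]
    _ = T y y * S (y * v) (y * v) := h.mul_eq_diag_mul_diag hidem y (y * v)

theorem mul_left_distrib (h : IsEntropicPair T S) (hidem : ∀ x : M, x * x = x) (x y v : M) :
    x * (y * v) = (x * y) * (x * v) := by
  rw [h, h.right_eq_right_diag_mul hidem, ← h.mul_eq_diag_mul_diag hidem]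

theorem right_diag_mul (h : IsEntropicPair T S) (hidem : ∀ x : M, x * x = x) (y v : M) :
    S (y * v) (y * v) = S y y * S v v := by
  apply mul_left_cancel (a := T y y)
  calc T y y * S (y * v) (y * v) = y * (y * v) := (h.mul_eq_diag_mul_diag hidem _ _).symm
    _ = (y * y) * (y * v) := h.mul_left_distrib hidem y y v
    _ = (T y y * S y y) * (T y y * S v v) := by
      rw [h.mul_eq_diag_mul_diag hidem y y, h.mul_eq_diag_mul_diag hidem y v]
    _ = T y y * (S y y * S v v) := (h.mul_left_distrib hidem _ _ _).symm

theorem left_mul_right_diag (h : IsEntropicPair T S) (hidem : ∀ x : M, x * x = x) (x u z : M) :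
    T x u * S z z = (x * u) * z := by
  have distrib := h.mul_left_distrib hidem
  have at_left : T x u * S x x = (x * u) * x := by
    rw [← h, hidem, distrib, hidem]
  apply mul_left_cancel (a := (x * u) * x)
  calc ((x * u) * x) * (T x u * S z z)
    _ = T x u * (S x x * S z z) := by rw [← at_left, ← distrib]
    _ = T x u * S x z := by rw [← h.right_diag_mul hidem, ← h.right_eq_right_diag_mul hidem]
    _ = x * (u * z) := by rw [← h, hidem]
    _ = (x * u) * (x * z) := distrib x u z
    _ = ((x * u) * x) * ((x * u) * z) := distrib (x * u) x z

theorem mul_mul_mul_comm_of_isLeftCancelMul (h : IsEntropicPair T S)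
    (hidem : ∀ x : M, x * x = x) (x y u v : M) :
    (x * y) * (u * v) = (x * u) * (y * v) := by
  rw [h, h.right_eq_right_diag_mul hidem, h.left_mul_right_diag hidem]

end LeftCancel

theorem mul_mul_mul_comm_of_isRightCancelMul [IsRightCancelMul M] (h : IsEntropicPair T S)
    (hidem : ∀ x : M, x * x = x) (x y u v : M) :
    (x * y) * (u * v) = (x * u) * (y * v) :=
  MulOpposite.op_injective <| h.op.mul_mul_mul_comm_of_isLeftCancelMul
    (fun a ↦ MulOpposite.unop_injective (hidem a.unop)) (.op v) (.op u) (.op y) (.op x)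

end IsEntropicPair

theorem stmt_10_general {M : Type*} [Mul M]
    (hidem : ∀ x : M, x * x = x)
    {T S : M → M → M} (h : IsEntropicPair T S)
    (hcanc : (∀ x y z : M, z * x = z * y → x = y) ∨
             (∀ x y z : M, x * z = y * z → x = y)) :
    ∀ x y u v : M, (x * y) * (u * v) = (x * u) * (y * v) := by
  rcases hcanc with hleft | hright
  · have : IsLeftCancelMul M := ⟨fun z x y ↦ hleft x y z⟩
    exact h.mul_mul_mul_comm_of_isLeftCancelMul hidem
  · have : IsRightCancelMul M := ⟨fun z x y ↦ hright x y z⟩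
    exact h.mul_mul_mul_comm_of_isRightCancelMul hidem

/-- An idempotent left or right cancellative magma satisfying the generalized
entropic property is medial. -/
theorem stmt_10 {M : Type*} [Mul M]
    (hidem : ∀ x : M, x * x = x)
    (hGEP : GEP M)
    (hcanc : (∀ x y z : M, z * x = z * y → x = y) ∨
             (∀ x y z : M, x * z = y * z → x = y)) :
    ∀ x y u v : M, (x * y) * (u * v) = (x * u) * (y * v) := by
  obtain ⟨_, _, h⟩ := hGEP
  exact stmt_10_general hidem h hcanc
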